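/- arXiv:1401.7646 — 17 statements merged into one kernel-verified Lean document; each statement's English description precedes it below -/
import Mathlib

section
/- Let H be an H2GC-algebra with operations ◇, ■, ◆, □. Then the following three conditions are pairwise equivalent: (i) (FS1): ◇(x ⇨ y) ≤ □x ⇨ ◇y for all x, y ∈ H; (ii) (D1): ◇x ⊓ □y ≤ ◇(x ⊓ y) for all x, y ∈ H; (iii) (FS4): (◆x ⇨ ■y) ≤ ■(x ⇨ y) for all x, y ∈ H. -/
/-!
(FS1) and (D1) are residuated forms of each other, by monotonicity of ◇ and the adjunction
between `⊓` and `⇨`. (D1) and (FS4) are exchanged by the two Galois connections: one direction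
applies (D1) to the unit `x ≤ □◆x`, the other applies (FS4) together with the counit `◆□y ≤ y`.
-/

/-- Proposition (a): in any H2GC-algebra, conditions (FS1), (D1) and (FS4) are
pairwise equivalent. Here `D` is ◇, `Bx` is ■, `Dd` is ◆ and `Sq` is □,
with (◇, ■) and (◆, □) Galois connections. -/
theorem stmt0 {H : Type*} [HeytingAlgebra H] (D Bx Dd Sq : H → H)
    (gc1 : ∀ x y : H, D x ≤ y ↔ x ≤ Bx y)
    (gc2 : ∀ x y : H, Dd x ≤ y ↔ x ≤ Sq y) :
    ((∀ x y : H, D (x ⇨ y) ≤ Sq x ⇨ D y) ↔ (∀ x y : H, D x ⊓ Sq y ≤ D (x ⊓ y))) ∧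
    ((∀ x y : H, D x ⊓ Sq y ≤ D (x ⊓ y)) ↔ (∀ x y : H, (Dd x ⇨ Bx y) ≤ Bx (x ⇨ y))) ∧
    ((∀ x y : H, D (x ⇨ y) ≤ Sq x ⇨ D y) ↔ (∀ x y : H, (Dd x ⇨ Bx y) ≤ Bx (x ⇨ y))) := by
  have monoD : Monotone D := GaloisConnection.monotone_l (u := Bx) gc1
  have fs1_iff_d1 : (∀ x y : H, D (x ⇨ y) ≤ Sq x ⇨ D y) ↔
      (∀ x y : H, D x ⊓ Sq y ≤ D (x ⊓ y)) := by
    constructor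
    · intro h x y
      have hx : x ≤ y ⇨ x ⊓ y := le_himp_iff.2 le_rfl
      exact le_himp_iff.1 ((monoD hx).trans (h y (x ⊓ y)))
    · intro h x y
      exact le_himp_iff.2 ((h _ _).trans (monoD himp_inf_le))
  have d1_iff_fs4 : (∀ x y : H, D x ⊓ Sq y ≤ D (x ⊓ y)) ↔
      (∀ x y : H, (Dd x ⇨ Bx y) ≤ Bx (x ⇨ y)) := by
    constructor
    · intro h x y
      have unit : x ≤ Sq (Dd x) := (gc2 _ _).1 le_rfl
      refine (gc1 _ _).1 (le_himp_iff.2 ?_)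
      calc D (Dd x ⇨ Bx y) ⊓ x ≤ D (Dd x ⇨ Bx y) ⊓ Sq (Dd x) := inf_le_inf_left _ unit
        _ ≤ D ((Dd x ⇨ Bx y) ⊓ Dd x) := h _ _
        _ ≤ y := (gc1 _ _).2 himp_inf_le
    · intro h x y
      have counit : Dd (Sq y) ≤ y := (gc2 _ _).2 le_rfl
      refine le_himp_iff.1 ((gc1 _ _).2 (le_trans (le_himp_iff.2 ?_) (h _ _)))
      exact (inf_le_inf_left x counit).trans ((gc1 _ _).1 le_rfl)
  exact ⟨fs1_iff_d1, d1_iff_fs4, fs1_iff_d1.trans d1_iff_fs4⟩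
end

section
/- Let H be an H2GC-algebra with operations ◇, ■, ◆, □. Then the following three conditions are pairwise equivalent: (i) (FS2): (◇x ⇨ □y) ≤ □(x ⇨ y) for all x, y ∈ H; (ii) (D2): ◆x ⊓ ■y ≤ ◆(x ⊓ y) for all x, y ∈ H; (iii) (FS3): ◆(x ⇨ y) ≤ ■x ⇨ ◆y for all x, y ∈ H. -/
/-!
(FS2) and (D2) are adjoint transposes of each other: moving `◆` across `◆ ⊣ □` and `⊓` across
residuation turns one into an instance of the other, up to the units and counits of the two
Galois connections. (D2) and (FS3) are equivalent by residuation and monotonicity of `◆` alone,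
since `(x ⇨ y) ⊓ x ≤ y` and `x ≤ y ⇨ x ⊓ y`.
-/

/-- Proposition (b): in any H2GC-algebra, conditions (FS2), (D2) and (FS3) are
pairwise equivalent. Here `D` is ◇, `Bx` is ■, `Dd` is ◆ and `Sq` is □,
with (◇, ■) and (◆, □) Galois connections. -/
theorem stmt1 {H : Type*} [HeytingAlgebra H] (D Bx Dd Sq : H → H)
    (gc1 : ∀ x y : H, D x ≤ y ↔ x ≤ Bx y)
    (gc2 : ∀ x y : H, Dd x ≤ y ↔ x ≤ Sq y) :
    ((∀ x y : H, (D x ⇨ Sq y) ≤ Sq (x ⇨ y)) ↔ (∀ x y : H, Dd x ⊓ Bx y ≤ Dd (x ⊓ y))) ∧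
    ((∀ x y : H, Dd x ⊓ Bx y ≤ Dd (x ⊓ y)) ↔ (∀ x y : H, Dd (x ⇨ y) ≤ Bx x ⇨ Dd y)) ∧
    ((∀ x y : H, (D x ⇨ Sq y) ≤ Sq (x ⇨ y)) ↔ (∀ x y : H, Dd (x ⇨ y) ≤ Bx x ⇨ Dd y)) := by
  have g1 : GaloisConnection D Bx := gc1
  have g2 : GaloisConnection Dd Sq := gc2
  have h12 : (∀ x y : H, (D x ⇨ Sq y) ≤ Sq (x ⇨ y)) ↔
      (∀ x y : H, Dd x ⊓ Bx y ≤ Dd (x ⊓ y)) := by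
    constructor
    · intro h x y
      rw [← le_himp_iff, gc2]
      -- (FS2) at `■y` and `◆(x ⊓ y)`, using `◇■y ≤ y` and `x ⊓ y ≤ □◆(x ⊓ y)`
      refine le_trans ?_ (h (Bx y) (Dd (x ⊓ y)))
      rw [le_himp_iff]
      exact (inf_le_inf_left x (g1.l_u_le y)).trans (g2.le_u_l (x ⊓ y))
    · intro h x y
      rw [← gc2, le_himp_iff]
      -- (D2) at `◇x ⇨ □y` and `◇x`, using `x ≤ ■◇x` and `◆□y ≤ y`
      calc Dd (D x ⇨ Sq y) ⊓ x ≤ Dd (D x ⇨ Sq y) ⊓ Bx (D x) :=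
            inf_le_inf_left _ (g1.le_u_l x)
        _ ≤ Dd ((D x ⇨ Sq y) ⊓ D x) := h _ _
        _ ≤ Dd (Sq y) := g2.monotone_l himp_inf_le
        _ ≤ y := g2.l_u_le y
  have h23 : (∀ x y : H, Dd x ⊓ Bx y ≤ Dd (x ⊓ y)) ↔
      (∀ x y : H, Dd (x ⇨ y) ≤ Bx x ⇨ Dd y) := by
    constructor
    · intro h x y
      rw [le_himp_iff]
      exact (h _ _).trans (g2.monotone_l himp_inf_le)
    · intro h x y
      rw [← le_himp_iff]
      -- `x ≤ y ⇨ x ⊓ y`, then (FS3)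
      exact (g2.monotone_l (le_himp_iff.2 le_rfl)).trans (h y (x ⊓ y))
  exact ⟨h12, h23, h12.trans h23⟩
end

section
/- An H2GC-algebra H satisfies the Fischer Servi conditions (FS1) and (FS2) if and only if it satisfies the Dunn conditions (D1) and (D2). -/
/-!
The equivalence splits into two independent ones. (FS1) ↔ (D1) uses only that `◇` is monotone,
together with the unit `x ≤ y ⇨ (x ⊓ y)` and counit `(x ⇨ y) ⊓ x ≤ y` of the Heyting implication.
(FS2) ↔ (D2) transposes along `◆ ⊣ □`, and uses `x ≤ ■◇x` and `◇■y ≤ y` to exchange `◇` for `■`.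
-/

/-- An H2GC-algebra satisfies the Fischer Servi conditions (FS1) and (FS2)
iff it satisfies the Dunn conditions (D1) and (D2). Here `D` is ◇, `Bx` is ■,
`Dd` is ◆ and `Sq` is □, with (◇, ■) and (◆, □) Galois connections. -/
theorem stmt2 {H : Type*} [HeytingAlgebra H] (D Bx Dd Sq : H → H)
    (gc1 : ∀ x y : H, D x ≤ y ↔ x ≤ Bx y)
    (gc2 : ∀ x y : H, Dd x ≤ y ↔ x ≤ Sq y) :
    ((∀ x y : H, D (x ⇨ y) ≤ Sq x ⇨ D y) ∧ (∀ x y : H, (D x ⇨ Sq y) ≤ Sq (x ⇨ y))) ↔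
    ((∀ x y : H, D x ⊓ Sq y ≤ D (x ⊓ y)) ∧ (∀ x y : H, Dd x ⊓ Bx y ≤ Dd (x ⊓ y))) := by
  have g1 : GaloisConnection D Bx := gc1
  have g2 : GaloisConnection Dd Sq := gc2
  refine and_congr ⟨fun fs x y => ?_, fun d x y => ?_⟩ ⟨fun fs x y => ?_, fun d x y => ?_⟩
  · have h : x ≤ y ⇨ x ⊓ y := le_himp_iff.2 le_rfl
    exact le_himp_iff.1 ((g1.monotone_l h).trans (fs y (x ⊓ y)))
  · exact le_himp_iff.2 ((d (x ⇨ y) x).trans (g1.monotone_l himp_inf_le))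
  · -- Since `◇■y ≤ y`, the unit of `(◆, □)` gives `x ≤ ◇■y ⇨ □◆(x ⊓ y)`.
    have h : x ≤ D (Bx y) ⇨ Sq (Dd (x ⊓ y)) :=
      le_himp_iff.2 ((inf_le_inf_left x (g1.l_u_le y)).trans (g2.le_u_l _))
    exact le_himp_iff.1 ((gc2 _ _).2 (h.trans (fs _ _)))
  · -- By adjunction the goal is `◆(◇x ⇨ □y) ⊓ x ≤ y`, and `x ≤ ■◇x`.
    rw [← gc2, le_himp_iff]
    calc Dd (D x ⇨ Sq y) ⊓ x ≤ Dd (D x ⇨ Sq y) ⊓ Bx (D x) :=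
          inf_le_inf_left _ (g1.le_u_l x)
      _ ≤ Dd ((D x ⇨ Sq y) ⊓ D x) := d _ _
      _ ≤ Dd (Sq y) := g2.monotone_l himp_inf_le
      _ ≤ y := g2.l_u_le y
end

section
/- In every H2GC+FS-algebra H, for all x, y ∈ H: □x ⊓ ◇y ≤ ◇(x ⊓ y) and ■x ⊓ ◆y ≤ ◆(x ⊓ y). -/
/-- In every H2GC+FS-algebra: □x ⊓ ◇y ≤ ◇(x ⊓ y) and ■x ⊓ ◆y ≤ ◆(x ⊓ y).
Here `D` is ◇, `Bx` is ■, `Dd` is ◆ and `Sq` is □. -/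
theorem stmt3 {H : Type*} [HeytingAlgebra H] (D Bx Dd Sq : H → H)
    (gc1 : ∀ x y : H, D x ≤ y ↔ x ≤ Bx y)
    (gc2 : ∀ x y : H, Dd x ≤ y ↔ x ≤ Sq y)
    (fs1 : ∀ x y : H, D (x ⇨ y) ≤ Sq x ⇨ D y)
    (fs2 : ∀ x y : H, (D x ⇨ Sq y) ≤ Sq (x ⇨ y)) :
    ∀ x y : H, Sq x ⊓ D y ≤ D (x ⊓ y) ∧ Bx x ⊓ Dd y ≤ Dd (x ⊓ y) := by
  have g1 : GaloisConnection D Bx := gc1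
  have g2 : GaloisConnection Dd Sq := gc2
  intro x y
  constructor
  · -- Apply the first Fischer Servi axiom to `y ≤ x ⇨ x ⊓ y`.
    have h : y ≤ x ⇨ x ⊓ y := le_himp_iff.2 (inf_comm _ _).le
    exact (inf_comm _ _).le.trans (le_himp_iff.1 ((g1.monotone_l h).trans (fs1 x (x ⊓ y))))
  · -- By adjunction and the second axiom it suffices that `y ⊓ ◇■x ≤ □◆(x ⊓ y)`,
    -- which follows from the counit `◇■x ≤ x` and the unit of `(◆, □)`.
    have h : y ≤ D (Bx x) ⇨ Sq (Dd (x ⊓ y)) :=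
      le_himp_iff.2 ((le_inf (inf_le_right.trans (g1.l_u_le x)) inf_le_left).trans
        (g2.le_u_l (x ⊓ y)))
    exact (inf_comm _ _).le.trans (le_himp_iff.1 ((gc2 _ _).2 (h.trans (fs2 _ _))))
end

section
/- In every H2GC+FS-algebra H, for all x, y ∈ H: □(x ⇨ y) ≤ ◇x ⇨ ◇y and ■(x ⇨ y) ≤ ◆x ⇨ ◆y. -/
/-- In every H2GC+FS-algebra: □(x ⇨ y) ≤ ◇x ⇨ ◇y and ■(x ⇨ y) ≤ ◆x ⇨ ◆y.
Here `D` is ◇, `Bx` is ■, `Dd` is ◆ and `Sq` is □. -/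
theorem stmt4 {H : Type*} [HeytingAlgebra H] (D Bx Dd Sq : H → H)
    (gc1 : ∀ x y : H, D x ≤ y ↔ x ≤ Bx y)
    (gc2 : ∀ x y : H, Dd x ≤ y ↔ x ≤ Sq y)
    (fs1 : ∀ x y : H, D (x ⇨ y) ≤ Sq x ⇨ D y)
    (fs2 : ∀ x y : H, (D x ⇨ Sq y) ≤ Sq (x ⇨ y)) :
    ∀ x y : H, Sq (x ⇨ y) ≤ D x ⇨ D y ∧ Bx (x ⇨ y) ≤ Dd x ⇨ Dd y := by
  intro x y
  constructor
  · -- Monotonicity of ◇ on `x ≤ (x ⇨ y) ⇨ y`, followed by (FS1).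
    have mono : D x ≤ D ((x ⇨ y) ⇨ y) :=
      (gc1 _ _).2 (le_himp_himp.trans ((gc1 _ _).1 le_rfl))
    exact le_himp_comm.1 (mono.trans (fs1 _ _))
  · -- By adjunction the claim is `x ≤ □(■(x ⇨ y) ⇨ ◆y)`, and (FS2) reduces it to
    -- `x ⊓ ◇■(x ⇨ y) ≤ □◆y`, which follows from `◇■ ≤ id ≤ □◆`.
    have counit : D (Bx (x ⇨ y)) ≤ x ⇨ y := (gc1 _ _).2 le_rfl
    have unit : y ≤ Sq (Dd y) := (gc2 _ _).1 le_rfl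
    refine le_himp_comm.1 ((gc2 _ _).2 (le_trans ?_ (fs2 _ _)))
    exact le_himp_comm.1 (counit.trans (himp_le_himp_left unit))
end

section
/- In every H2GC+FS-algebra H, for all x ∈ H: □(¬x) ≤ ¬(◇x) and ■(¬x) ≤ ¬(◆x), where ¬x := x ⇨ ⊥ is the Heyting negation. -/
/-- In every H2GC+FS-algebra: □(¬x) ≤ ¬(◇x) and ■(¬x) ≤ ¬(◆x), where
¬x := x ⇨ ⊥. Here `D` is ◇, `Bx` is ■, `Dd` is ◆ and `Sq` is □. -/
theorem stmt5 {H : Type*} [HeytingAlgebra H] (D Bx Dd Sq : H → H)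
    (gc1 : ∀ x y : H, D x ≤ y ↔ x ≤ Bx y)
    (gc2 : ∀ x y : H, Dd x ≤ y ↔ x ≤ Sq y)
    (fs1 : ∀ x y : H, D (x ⇨ y) ≤ Sq x ⇨ D y)
    (fs2 : ∀ x y : H, (D x ⇨ Sq y) ≤ Sq (x ⇨ y)) :
    ∀ x : H, Sq (x ⇨ ⊥) ≤ D x ⇨ ⊥ ∧ Bx (x ⇨ ⊥) ≤ Dd x ⇨ ⊥ := by
  intro x
  have hmono : Monotone D := GaloisConnection.monotone_l (u := Bx) gc1
  have hbot : D ⊥ ≤ ⊥ := (gc1 ⊥ ⊥).2 bot_le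
  constructor
  · -- (FS1) at `¬x ⇨ ⊥`, together with `x ≤ ¬¬x` and `◇⊥ = ⊥`.
    have h : D x ≤ Sq (x ⇨ ⊥) ⇨ ⊥ :=
      (hmono (le_himp_himp (a := x) (b := ⊥))).trans
        ((fs1 _ _).trans (himp_le_himp_left hbot))
    exact le_himp_comm.1 h
  · -- By adjunction the claim is `x ≤ □¬■¬x`; (FS2) reduces it to
    -- `x ⊓ ◇■¬x ≤ □⊥`, which follows from `◇■¬x ≤ ¬x`.
    refine le_himp_comm.1 ((gc2 _ _).2 (le_trans ?_ (fs2 _ _)))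
    have h : D (Bx (x ⇨ ⊥)) ≤ x ⇨ ⊥ := (gc1 _ _).2 le_rfl
    exact (le_himp_comm.1 h).trans (himp_le_himp_left bot_le)
end

section
/- There exist a frame (complete Heyting algebra) H, a finite type U, a fuzzy relation R : U → U → H, and φ, ψ : U → H such that, with the fuzzy modal operators defined from R, neither □(φ ⊔ ψ) ≤ □φ ⊔ ◇ψ nor ■(φ ⊔ ψ) ≤ ■φ ⊔ ◆ψ holds (the second Dunn axiom fails). -/
/-!
On a one-point universe with `R = ψ = b` and `φ = ⊥`, both inequalities read
`b ⇨ (⊥ ⊔ b) ≤ (b ⇨ ⊥) ⊔ (b ⊓ b)`, that is, `⊤ ≤ bᶜ ⊔ b`. So every frame in which excluded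
middle fails refutes them, and the three-element chain is the smallest one.
-/

/-- There are a frame `H`, a finite type `U`, a fuzzy relation `R` and fuzzy
sets `φ, ψ` such that the second Dunn axiom fails for the induced fuzzy modal
operators: neither □(φ ⊔ ψ) ≤ □φ ⊔ ◇ψ nor ■(φ ⊔ ψ) ≤ ■φ ⊔ ◆ψ holds. -/
theorem stmt9 :
    ∃ (H : Type) (_ : Order.Frame H) (U : Type) (_ : Fintype U)
      (R : U → U → H) (φ ψ : U → H),
      ¬ ((fun x => ⨅ y, R x y ⇨ (φ ⊔ ψ) y) ≤
          (fun x => ⨅ y, R x y ⇨ φ y) ⊔ (fun x => ⨆ y, R x y ⊓ ψ y)) ∧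
      ¬ ((fun x => ⨅ y, R y x ⇨ (φ ⊔ ψ) y) ≤
          (fun x => ⨅ y, R y x ⇨ φ y) ⊔ (fun x => ⨆ y, R y x ⊓ ψ y)) := by
  -- The middle element `1` of the chain `0 < 1 < 2` violates excluded middle.
  refine ⟨Fin 3, inferInstance, Unit, inferInstance, fun _ _ => 1, fun _ => ⊥, fun _ => 1, ?_⟩
  have key : ¬ ((1 : Fin 3) ⇨ (⊥ ⊔ 1) ≤ (1 ⇨ ⊥) ⊔ (1 ⊓ 1)) := by
    have h : (1 : Fin 3) ⇨ ⊥ = ⊥ := by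
      have h1 : ((1 : Fin 3) ⇨ ⊥) ⊓ 1 ≤ ⊥ := himp_inf_le
      generalize (1 : Fin 3) ⇨ ⊥ = c at h1 ⊢
      revert c
      decide
    rw [h, bot_sup_eq, bot_sup_eq, himp_self, inf_idem]
    decide
  constructor <;>
  · intro h
    have h0 := h ()
    simp only [Pi.sup_apply, ciInf_unique, ciSup_unique] at h0
    exact key h0
end

section
/- There exist a frame (complete Heyting algebra) H, a type U, a fuzzy relation R : U → U → H, and φ : U → H such that, with the fuzzy modal operators defined from R and with negation acting pointwise by (¬χ)(x) = χ(x) ⇨ ⊥, both De Morgan identities fail: ◇φ ≠ ¬□(¬φ) and □φ ≠ ¬◇(¬φ). -/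
/-! In a frame, `¬¬a = a` may fail, and over a one-point universe with `R` constantly `⊤` both
De Morgan identities reduce to `a = ¬¬a`, where `a` is the value of `φ`. In the linear frame
`ℕ∞`, the element `1` has pseudocomplement `0`, so `¬¬1 = ⊤ ≠ 1`. -/

theorem enat_one_himp_bot : ((1 : ℕ∞) ⇨ ⊥) = ⊥ := by
  have h : (1 : ℕ∞) ⊓ (1 ⇨ ⊥) ≤ ⊥ := inf_himp_le
  rcases inf_le_iff.mp h with h | h
  · simp at h
  · exact le_bot_iff.mp h

/-- There are a frame `H`, a type `U`, a fuzzy relation `R` and a fuzzy set `φ`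
such that both De Morgan identities fail for the induced fuzzy modal operators:
◇φ ≠ ¬□(¬φ) and □φ ≠ ¬◇(¬φ), where negation acts pointwise by ¬χ x = χ x ⇨ ⊥. -/
theorem stmt10 :
    ∃ (H : Type) (_ : Order.Frame H) (U : Type) (R : U → U → H) (φ : U → H),
      ((fun x => ⨆ y, R x y ⊓ φ y) ≠
        fun x => (⨅ y, R x y ⇨ (φ y ⇨ ⊥)) ⇨ ⊥) ∧
      ((fun x => ⨅ y, R x y ⇨ φ y) ≠
        fun x => (⨆ y, R x y ⊓ (φ y ⇨ ⊥)) ⇨ ⊥) := by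
  refine ⟨ℕ∞, inferInstance, Unit, fun _ _ => ⊤, fun _ => 1, fun h => ?_, fun h => ?_⟩
  · have h := congrFun h ()
    simp only [enat_one_himp_bot, top_himp, top_inf_eq, ciSup_const, ciInf_const, himp_self] at h
    exact ENat.one_ne_top h
  · have h := congrFun h ()
    simp only [enat_one_himp_bot, top_himp, top_inf_eq, ciSup_const, ciInf_const, himp_self] at h
    exact ENat.one_ne_top h
end

section
/- There exist a finite Heyting algebra H and unary operations ◇, ■, ◆, □ on H such that (◇, ■) and (◆, □) are Galois connections, the second Dunn conditions hold for all x, y ∈ H (□(x ⊔ y) ≤ □x ⊔ ◇y and ■(x ⊔ y) ≤ ■x ⊔ ◆y), and yet the first Dunn condition fails: there exist a, b ∈ H with ◇a ⊓ □b ≰ ◇(a ⊓ b). Hence in Heyting algebras with two Galois connections the two Dunn conditions of each pair are independent. -/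
/-- There exist a finite Heyting algebra `H` with two Galois connections
(◇, ■) and (◆, □) satisfying the second Dunn conditions
□(x ⊔ y) ≤ □x ⊔ ◇y and ■(x ⊔ y) ≤ ■x ⊔ ◆y for all x, y, in which the first
Dunn condition fails: ◇a ⊓ □b ≰ ◇(a ⊓ b) for some a, b. Hence the two Dunn
conditions are independent. Here `D` is ◇, `Bx` is ■, `Dd` is ◆, `Sq` is □. -/
theorem stmt11 :
    ∃ (H : Type) (_ : HeytingAlgebra H) (_ : Fintype H) (D Bx Dd Sq : H → H),
      (∀ x y : H, D x ≤ y ↔ x ≤ Bx y) ∧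
      (∀ x y : H, Dd x ≤ y ↔ x ≤ Sq y) ∧
      (∀ x y : H, Sq (x ⊔ y) ≤ Sq x ⊔ D y) ∧
      (∀ x y : H, Bx (x ⊔ y) ≤ Bx x ⊔ Dd y) ∧
      (∃ a b : H, ¬ (D a ⊓ Sq b ≤ D (a ⊓ b))) := by
  -- A three-element chain `0 < 1 < 2` already suffices, with ◆ = ◇ and ■ = □:
  -- ◇ sends `2` to `2` and everything below to `0`; its right adjoint □ fixes `2` and sends
  -- everything below to `1`. The first condition fails at `a = 2`, `b = 1`: ◇2 ⊓ □1 = 1 ≰ 0 = ◇1.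
  refine ⟨Fin 3, inferInstance, inferInstance, ![0, 0, 2], ![1, 1, 2], ![0, 0, 2], ![1, 1, 2],
    ?_, ?_, ?_, ?_, 2, 1, ?_⟩ <;> decide
end

section
/- Let (X, ≤) be a preorder with converse relation ≥, and let R be a binary relation on X, with R⁻¹ its converse. Then (X, ≤, R) is an IK-frame if and only if both (X, ≤, R ∘ ≥) and (X, ≤, R⁻¹ ∘ ≥) are IntGC-frames; that is, R satisfies (R ∘ ≤) ⊆ (≤ ∘ R) and (≥ ∘ R) ⊆ (R ∘ ≥) if and only if (≥ ∘ (R ∘ ≥) ∘ ≥) ⊆ (R ∘ ≥) and (≥ ∘ (R⁻¹ ∘ ≥) ∘ ≥) ⊆ (R⁻¹ ∘ ≥). -/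
/-- `(X, ≤, R)` is an IK-frame iff `(X, ≤, R ∘ ≥)` and `(X, ≤, R⁻¹ ∘ ≥)` are
IntGC-frames: `R` satisfies (R ∘ ≤) ⊆ (≤ ∘ R) and (≥ ∘ R) ⊆ (R ∘ ≥) iff
(≥ ∘ (R ∘ ≥) ∘ ≥) ⊆ (R ∘ ≥) and (≥ ∘ (R⁻¹ ∘ ≥) ∘ ≥) ⊆ (R⁻¹ ∘ ≥). -/
theorem stmt12 {X : Type*} [Preorder X] (R : X → X → Prop) :
    ((∀ x y : X, (∃ z, R x z ∧ z ≤ y) → ∃ z, x ≤ z ∧ R z y) ∧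
     (∀ x y : X, (∃ z, z ≤ x ∧ R z y) → ∃ z, R x z ∧ y ≤ z)) ↔
    ((∀ x y : X, (∃ u v, u ≤ x ∧ (∃ w, R u w ∧ v ≤ w) ∧ y ≤ v) →
        ∃ w, R x w ∧ y ≤ w) ∧
     (∀ x y : X, (∃ u v, u ≤ x ∧ (∃ w, R w u ∧ v ≤ w) ∧ y ≤ v) →
        ∃ w, R w x ∧ y ≤ w)) := by
  -- The condition on `R ∘ ≥` matches `(≥ ∘ R) ⊆ (R ∘ ≥)`; the condition on `R⁻¹ ∘ ≥`
  -- matches the converse of `(R ∘ ≤) ⊆ (≤ ∘ R)`. The outer `≥` is absorbed by transitivity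
  -- in one direction and instantiated by reflexivity in the other.
  constructor
  · rintro ⟨h1, h2⟩
    refine ⟨?_, ?_⟩
    · rintro x y ⟨u, v, hux, ⟨w, hR, hvw⟩, hyv⟩
      obtain ⟨z, hz, hwz⟩ := h2 x w ⟨u, hux, hR⟩
      exact ⟨z, hz, (hyv.trans hvw).trans hwz⟩
    · rintro x y ⟨u, v, hux, ⟨w, hR, hvw⟩, hyv⟩
      obtain ⟨z, hwz, hz⟩ := h1 w x ⟨u, hR, hux⟩
      exact ⟨z, hz, (hyv.trans hvw).trans hwz⟩
  · rintro ⟨h1, h2⟩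
    refine ⟨?_, ?_⟩
    · rintro x y ⟨z, hR, hzy⟩
      obtain ⟨w, hw, hxw⟩ := h2 y x ⟨z, x, hzy, ⟨x, hR, le_rfl⟩, le_rfl⟩
      exact ⟨w, hxw, hw⟩
    · rintro x y ⟨z, hzx, hR⟩
      exact h1 x y ⟨z, y, hzx, ⟨y, hR, le_rfl⟩, le_rfl⟩
end

section
/- Let H be an H2GC+FS-algebra and let F, G be prime filters of H. Then F R^c G, i.e. (∀x, □x ∈ F → x ∈ G) and (∀x, x ∈ G → ◇x ∈ F), holds if and only if (∀x, ■x ∈ G → x ∈ F) and (∀x, x ∈ F → ◆x ∈ G). -/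
/-- `F` is a prime filter of the Heyting algebra `H`: nonempty, upward closed,
closed under binary meets, proper, and prime. -/
def IsPrimeFilter {H : Type*} [HeytingAlgebra H] (F : Set H) : Prop :=
  F.Nonempty ∧ (∀ x y : H, x ∈ F → x ≤ y → y ∈ F) ∧
    (∀ x y : H, x ∈ F → y ∈ F → x ⊓ y ∈ F) ∧ F ≠ Set.univ ∧
    (∀ x y : H, x ⊔ y ∈ F → x ∈ F ∨ y ∈ F)

/-- The canonical relation on prime filters:
`F R^c G` iff (∀ x, □x ∈ F → x ∈ G) and (∀ x, x ∈ G → ◇x ∈ F),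
where `Sq` is □ and `D` is ◇. -/
def Rc {H : Type*} [HeytingAlgebra H] (Sq D : H → H) (F G : Set H) : Prop :=
  (∀ x : H, Sq x ∈ F → x ∈ G) ∧ (∀ x : H, x ∈ G → D x ∈ F)

/-- In an H2GC+FS-algebra, for prime filters `F`, `G`:
`F R^c G` iff (∀ x, ■x ∈ G → x ∈ F) and (∀ x, x ∈ F → ◆x ∈ G).
Here `D` is ◇, `Bx` is ■, `Dd` is ◆ and `Sq` is □. -/
theorem stmt13 {H : Type*} [HeytingAlgebra H] (D Bx Dd Sq : H → H)
    (gc1 : ∀ x y : H, D x ≤ y ↔ x ≤ Bx y)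
    (gc2 : ∀ x y : H, Dd x ≤ y ↔ x ≤ Sq y)
    (fs1 : ∀ x y : H, D (x ⇨ y) ≤ Sq x ⇨ D y)
    (fs2 : ∀ x y : H, (D x ⇨ Sq y) ≤ Sq (x ⇨ y))
    (F G : Set H) (hF : IsPrimeFilter F) (hG : IsPrimeFilter G) :
    Rc Sq D F G ↔ ((∀ x : H, Bx x ∈ G → x ∈ F) ∧ (∀ x : H, x ∈ F → Dd x ∈ G)) := by
  obtain ⟨-, upF, -, -, -⟩ := hF
  obtain ⟨-, upG, -, -, -⟩ := hG
  -- Each of the four implications uses one unit or counit of a Galois connection: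
  -- `◇■x ≤ x`, `x ≤ □◆x`, `◆□x ≤ x` and `x ≤ ■◇x` respectively.
  constructor
  · rintro ⟨hSq, hD⟩
    exact ⟨fun x hx => upF _ _ (hD _ hx) ((gc1 _ _).2 le_rfl),
      fun x hx => hSq _ (upF _ _ hx ((gc2 _ _).1 le_rfl))⟩
  · rintro ⟨hBx, hDd⟩
    exact ⟨fun x hx => upG _ _ (hDd _ hx) ((gc2 _ _).2 le_rfl),
      fun x hx => hBx _ (upG _ _ hx ((gc1 _ _).1 le_rfl))⟩
end

section
/- Let H be an H2GC+FS-algebra and let F, G be prime filters of H. Then there exists a prime filter J with F ⊆ J and J R^c G if and only if for all x ∈ F, ◆x ∈ G. -/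
/-- The prime filter theorem for distributive lattices, stated for bases of the filter and the
ideal: if `A` is down-directed and `B` is up-directed and no element of `A` lies below an element
of `B`, some prime filter contains `A` and misses `B`. -/
theorem exists_isPrimeFilter_of_directed {H : Type*} [HeytingAlgebra H] {A B : Set H}
    (hA : A.Nonempty) (hAd : DirectedOn (· ≥ ·) A)
    (hB : B.Nonempty) (hBd : DirectedOn (· ≤ ·) B)
    (hAB : ∀ a ∈ A, ∀ b ∈ B, ¬ a ≤ b) :
    ∃ J : Set H, IsPrimeFilter J ∧ A ⊆ J ∧ ∀ b ∈ B, b ∉ J := by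
  have hP : Order.IsPFilter {x : H | ∃ a ∈ A, a ≤ x} := by
    refine Order.IsPFilter.of_def ?_ ?_ ?_
    · obtain ⟨a, ha⟩ := hA
      exact ⟨a, a, ha, le_rfl⟩
    · rintro x ⟨a, ha, hax⟩ y ⟨b, hb, hby⟩
      obtain ⟨c, hc, hca, hcb⟩ := hAd a ha b hb
      exact ⟨c, ⟨c, hc, le_rfl⟩, le_trans hca hax, le_trans hcb hby⟩
    · rintro x y hxy ⟨a, ha, hax⟩
      exact ⟨a, ha, hax.trans hxy⟩
  let I : Order.Ideal H :=
    { carrier := {x : H | ∃ b ∈ B, x ≤ b}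
      lower' := by
        rintro x y hyx ⟨b, hb, hxb⟩
        exact ⟨b, hb, le_trans hyx hxb⟩
      nonempty' := by
        obtain ⟨b, hb⟩ := hB
        exact ⟨b, b, hb, le_rfl⟩
      directed' := by
        rintro x ⟨a, ha, hxa⟩ y ⟨b, hb, hyb⟩
        obtain ⟨c, hc, hac, hbc⟩ := hBd a ha b hb
        exact ⟨c, ⟨c, hc, le_rfl⟩, le_trans hxa hac, le_trans hyb hbc⟩ }
  have hdis : Disjoint (hP.toPFilter : Set H) (I : Set H) := by
    rw [Set.disjoint_left]
    rintro x ⟨a, ha, hax⟩ ⟨b, hb, hxb⟩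
    exact hAB a ha b hb (hax.trans hxb)
  obtain ⟨K, hK, hIK, hPK⟩ := DistribLattice.prime_ideal_of_disjoint_filter_ideal hdis
  have hAK : ∀ a ∈ A, a ∉ K := fun a ha => Set.disjoint_left.1 hPK ⟨a, ha, le_rfl⟩
  refine ⟨{x | x ∉ K}, ⟨?_, ?_, ?_, ?_, ?_⟩, hAK, fun b hb hbK => hbK (hIK ⟨b, hb, le_rfl⟩)⟩
  · obtain ⟨a, ha⟩ := hA
    exact ⟨a, hAK a ha⟩
  · exact fun x y hx hxy hy => hx (K.lower hxy hy)
  · exact fun x y hx hy hxy => (hK.mem_or_mem hxy).elim hx hy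
  · intro h
    obtain ⟨b, hb⟩ := hB
    have hbK : b ∈ {x | x ∉ K} := h ▸ Set.mem_univ b
    exact hbK (hIK ⟨b, hb, le_rfl⟩)
  · intro x y hxy
    by_contra! h
    simp only [Set.mem_ofPred_eq, not_not] at h
    exact hxy (Order.Ideal.sup_mem h.1 h.2)

/-- In an H2GC+FS-algebra, for prime filters F, G:
F (⊆ ∘ R^c) G iff F ⊆ ◆⁻¹G, i.e. there is a prime filter J with F ⊆ J and
J R^c G iff ∀ x ∈ F, ◆x ∈ G. Here `D` is ◇, `Bx` is ■, `Dd` is ◆, `Sq` is □. -/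
theorem stmt14 {H : Type*} [HeytingAlgebra H] (D Bx Dd Sq : H → H)
    (gc1 : ∀ x y : H, D x ≤ y ↔ x ≤ Bx y)
    (gc2 : ∀ x y : H, Dd x ≤ y ↔ x ≤ Sq y)
    (fs1 : ∀ x y : H, D (x ⇨ y) ≤ Sq x ⇨ D y)
    (fs2 : ∀ x y : H, (D x ⇨ Sq y) ≤ Sq (x ⇨ y))
    (F G : Set H) (hF : IsPrimeFilter F) (hG : IsPrimeFilter G) :
    (∃ J : Set H, IsPrimeFilter J ∧ F ⊆ J ∧ Rc Sq D J G) ↔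
      (∀ x : H, x ∈ F → Dd x ∈ G) := by
  have gcD : GaloisConnection D Bx := gc1
  have gcS : GaloisConnection Dd Sq := gc2
  constructor
  · rintro ⟨J, hJ, hFJ, hR, -⟩ x hx
    exact hR _ (hJ.2.1 _ _ (hFJ hx) (gcS.le_u_l x))
  intro h
  obtain ⟨⟨f₀, hf₀⟩, -, Finf, -, -⟩ := hF
  obtain ⟨⟨g₀, hg₀⟩, Gup, Ginf, Gne, Gprime⟩ := hG
  obtain ⟨J, hJ, hAJ, hBJ⟩ := exists_isPrimeFilter_of_directed
    (A := {a | ∃ f ∈ F, ∃ g ∈ G, a = f ⊓ D g}) (B := {b | ∃ y, y ∉ G ∧ b = Sq y})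
    ⟨_, f₀, hf₀, g₀, hg₀, rfl⟩
    (by
      rintro _ ⟨f, hf, g, hg, rfl⟩ _ ⟨f', hf', g', hg', rfl⟩
      exact ⟨_, ⟨f ⊓ f', Finf _ _ hf hf', g ⊓ g', Ginf _ _ hg hg', rfl⟩,
        inf_le_inf inf_le_left (gcD.monotone_l inf_le_left),
        inf_le_inf inf_le_right (gcD.monotone_l inf_le_right)⟩)
    (by
      obtain ⟨y, hy⟩ := (Set.ne_univ_iff_exists_notMem G).1 Gne
      exact ⟨_, y, hy, rfl⟩)
    (by
      rintro _ ⟨y, hy, rfl⟩ _ ⟨z, hz, rfl⟩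
      exact ⟨_, ⟨y ⊔ z, fun hyz => (Gprime _ _ hyz).elim hy hz, rfl⟩,
        gcS.monotone_u le_sup_left, gcS.monotone_u le_sup_right⟩)
    (by
      rintro _ ⟨f, hf, g, hg, rfl⟩ _ ⟨y, hy, rfl⟩ hle
      have hfS : f ≤ Sq (g ⇨ y) := (le_himp_iff.2 hle).trans (fs2 g y)
      have hgy : g ⇨ y ∈ G := Gup _ _ (h f hf) ((gc2 _ _).2 hfS)
      exact hy (Gup _ _ (Ginf _ _ hgy hg) himp_inf_le))
  refine ⟨J, hJ, fun f hf => ?_, fun x hx => ?_, fun g hg => ?_⟩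
  · exact hJ.2.1 _ _ (hAJ ⟨f, hf, g₀, hg₀, rfl⟩) inf_le_left
  · by_contra hxG
    exact hBJ _ ⟨x, hxG, rfl⟩ hx
  · exact hJ.2.1 _ _ (hAJ ⟨f₀, hf₀, g, hg, rfl⟩) inf_le_right
end

section
/- Let H be an H2GC+FS-algebra and let F, G be prime filters of H. Then there exists a prime filter J with F R^c J and G ⊆ J if and only if for all x, ■x ∈ G implies x ∈ F. -/
/-- The prime filter theorem in a Heyting algebra, for filters and ideals given as sets: the
complement of Mathlib's separating prime ideal is the required prime filter. -/
theorem exists_isPrimeFilter_of_disjoint {H : Type*} [HeytingAlgebra H] (K I : Set H)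
    (hKtop : ⊤ ∈ K) (hKup : ∀ x y, x ∈ K → x ≤ y → y ∈ K)
    (hKinf : ∀ x y, x ∈ K → y ∈ K → x ⊓ y ∈ K)
    (hIbot : ⊥ ∈ I) (hIdown : ∀ x y, y ∈ I → x ≤ y → x ∈ I)
    (hIsup : ∀ x y, x ∈ I → y ∈ I → x ⊔ y ∈ I)
    (hKI : ∀ x, x ∈ K → x ∉ I) :
    ∃ J : Set H, IsPrimeFilter J ∧ K ⊆ J ∧ ∀ x ∈ J, x ∉ I := by
  have hK : Order.IsPFilter K := Order.IsPFilter.of_def ⟨⊤, hKtop⟩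
    (fun x hx y hy => ⟨x ⊓ y, hKinf x y hx hy, inf_le_left, inf_le_right⟩)
    (fun {x y} hxy hx => hKup x y hx hxy)
  have hI : Order.IsIdeal I := ⟨fun y x hxy hy => hIdown x y hy hxy, ⟨⊥, hIbot⟩,
    fun x hx y hy => ⟨x ⊔ y, hIsup x y hx hy, le_sup_left, le_sup_right⟩⟩
  obtain ⟨P, hP, hIP, hKP⟩ := DistribLattice.prime_ideal_of_disjoint_filter_ideal
    (F := hK.toPFilter) (I := hI.toIdeal) (Set.disjoint_left.2 hKI)
  have hKP' : ∀ x ∈ K, x ∉ P := fun x hx => Set.disjoint_left.1 hKP hx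
  refine ⟨{x | x ∉ P}, ⟨⟨⊤, hKP' _ hKtop⟩, fun x y hx hxy hy => hx (P.lower hxy hy), ?_, ?_, ?_⟩,
    hKP', fun x hx hxI => hx (hIP hxI)⟩
  · intro x y hx hy hxy
    exact (hP.mem_or_mem hxy).elim hx hy
  · intro h
    exact (Set.eq_univ_iff_forall.1 h ⊥) P.bot_mem
  · intro x y hxy
    by_contra! h
    have hx : x ∈ P := by simpa using h.1
    have hy : y ∈ P := by simpa using h.2
    exact hxy (Order.Ideal.sup_mem hx hy)

/-- In an H2GC+FS-algebra, for prime filters F, G: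
F (R^c ∘ ⊇) G iff ■⁻¹G ⊆ F, i.e. there is a prime filter J with F R^c J and
G ⊆ J iff ∀ x, ■x ∈ G → x ∈ F. Here `D` is ◇, `Bx` is ■, `Dd` is ◆, `Sq` is □. -/
theorem stmt15 {H : Type*} [HeytingAlgebra H] (D Bx Dd Sq : H → H)
    (gc1 : ∀ x y : H, D x ≤ y ↔ x ≤ Bx y)
    (gc2 : ∀ x y : H, Dd x ≤ y ↔ x ≤ Sq y)
    (fs1 : ∀ x y : H, D (x ⇨ y) ≤ Sq x ⇨ D y)
    (fs2 : ∀ x y : H, (D x ⇨ Sq y) ≤ Sq (x ⇨ y))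
    (F G : Set H) (hF : IsPrimeFilter F) (hG : IsPrimeFilter G) :
    (∃ J : Set H, IsPrimeFilter J ∧ Rc Sq D F J ∧ G ⊆ J) ↔
      (∀ x : H, Bx x ∈ G → x ∈ F) := by
  obtain ⟨⟨f, hf⟩, hFup, hFinf, hFne, hFprime⟩ := hF
  obtain ⟨⟨g, hg⟩, hGup, hGinf, -, -⟩ := hG
  have gcD : GaloisConnection D Bx := gc1
  have gcS : GaloisConnection Dd Sq := gc2
  constructor
  · rintro ⟨J, -, ⟨-, hJF⟩, hGJ⟩ x hx
    exact hFup _ _ (hJF _ (hGJ hx)) (gcD.l_u_le x)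
  · intro h
    have hDG : ∀ b ∈ G, D b ∈ F := fun b hb => h _ (hGup _ _ hb (gcD.le_u_l b))
    obtain ⟨J, hJ, hKJ, hJI⟩ := exists_isPrimeFilter_of_disjoint
      {z | ∃ a b, Sq a ∈ F ∧ b ∈ G ∧ a ⊓ b ≤ z} {y | D y ∉ F}
      ⟨⊤, g, by rw [gcS.u_top]; exact hFup _ _ hf le_top, hg, le_top⟩
      (fun x y ⟨a, b, ha, hb, hab⟩ hxy => ⟨a, b, ha, hb, hab.trans hxy⟩)
      (fun x y ⟨a, b, ha, hb, hab⟩ ⟨a', b', ha', hb', hab'⟩ =>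
        ⟨a ⊓ a', b ⊓ b', by rw [gcS.u_inf]; exact hFinf _ _ ha ha', hGinf _ _ hb hb', by
          rw [inf_inf_inf_comm]; exact inf_le_inf hab hab'⟩)
      (by
        rw [Set.mem_ofPred_eq, gcD.l_bot]
        exact fun hbot => hFne (Set.eq_univ_of_forall fun x => hFup _ _ hbot bot_le))
      (fun x y hy hxy hx => hy (hFup _ _ hx (gcD.monotone_l hxy)))
      (fun x y hx hy hxy => by
        rw [gcD.l_sup] at hxy
        exact (hFprime _ _ hxy).elim hx hy)
      (by
        rintro z ⟨a, b, ha, hb, hab⟩ hz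
        have hle : D b ≤ Sq a ⇨ D z :=
          (gcD.monotone_l (le_himp_iff'.2 hab)).trans (fs1 a z)
        exact hz (hFup _ _ (hFinf _ _ (hDG b hb) ha) (le_himp_iff.1 hle)))
    refine ⟨J, hJ, ⟨fun x hx => hKJ ⟨x, g, hx, hg, inf_le_left⟩, fun x hx => ?_⟩,
      fun x hx => hKJ ⟨⊤, x, ?_, hx, inf_le_right⟩⟩
    · exact not_not.1 (hJI x hx)
    · rw [gcS.u_top]
      exact hFup _ _ hf le_top
end

section
/- Let H be an H2GC+FS-algebra. For every x ∈ H, the set of prime filters containing ◆x equals the set of prime filters F for which there exists a prime filter G with G R^c F and x ∈ G; that is, h(◆x) = ◆^c(h(x)) where h(x) = {F prime filter | x ∈ F} and ◆^c A = {F prime filter | ∃ G prime filter, G R^c F and G ∈ A}. -/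
/-- Prime filter theorem; `G` is the complement of a prime ideal containing `I` and disjoint from `P`. -/
lemma exists_isPrimeFilter_separating {H : Type*} [HeytingAlgebra H] (P : Order.PFilter H)
    (I : Order.Ideal H) (h : Disjoint (P : Set H) (I : Set H)) :
    ∃ G : Set H, IsPrimeFilter G ∧ (∀ y ∈ P, y ∈ G) ∧ ∀ y ∈ I, y ∉ G := by
  obtain ⟨J, hJ, hIJ, hPJ⟩ := DistribLattice.prime_ideal_of_disjoint_filter_ideal h
  refine ⟨(J : Set H)ᶜ, ⟨?_, ?_, ?_, ?_, ?_⟩, ?_, ?_⟩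
  · obtain ⟨y, hy⟩ := P.nonempty
    exact ⟨y, fun hyJ => Set.disjoint_left.1 hPJ hy hyJ⟩
  · exact fun y z hy hyz hz => hy (J.lower hyz hz)
  · intro y z hy hz hyz
    exact (hJ.mem_or_mem hyz).elim hy hz
  · intro huniv
    obtain ⟨y, hy⟩ := J.nonempty
    exact (huniv ▸ Set.mem_univ y : y ∈ (J : Set H)ᶜ) hy
  · intro y z hyz
    by_contra! hcon
    exact hyz (Order.Ideal.sup_mem (not_not.1 hcon.1) (not_not.1 hcon.2))
  · exact fun y hy hyJ => Set.disjoint_left.1 hPJ hy hyJ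
  · exact fun y hy hyJ => hyJ (hIJ hy)

/-- In an H2GC+FS-algebra, h(◆x) = ◆^c(h(x)): a prime filter F contains ◆x
iff there is a prime filter G with G R^c F and x ∈ G.
Here `D` is ◇, `Bx` is ■, `Dd` is ◆ and `Sq` is □. -/
theorem stmt16 {H : Type*} [HeytingAlgebra H] (D Bx Dd Sq : H → H)
    (gc1 : ∀ x y : H, D x ≤ y ↔ x ≤ Bx y)
    (gc2 : ∀ x y : H, Dd x ≤ y ↔ x ≤ Sq y)
    (fs1 : ∀ x y : H, D (x ⇨ y) ≤ Sq x ⇨ D y)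
    (fs2 : ∀ x y : H, (D x ⇨ Sq y) ≤ Sq (x ⇨ y))
    (x : H) :
    {F : {F : Set H // IsPrimeFilter F} | Dd x ∈ F.1} =
      {F : {F : Set H // IsPrimeFilter F} |
        ∃ G : {F : Set H // IsPrimeFilter F}, Rc Sq D G.1 F.1 ∧
          G ∈ {G : {F : Set H // IsPrimeFilter F} | x ∈ G.1}} := by
  have hD : Monotone D := GaloisConnection.monotone_l (u := Bx) gc1
  have hSq : Monotone Sq := GaloisConnection.monotone_u (l := Dd) gc2
  ext ⟨F, hF⟩
  simp only [Set.mem_ofPred_eq]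
  obtain ⟨hne, hup, hinf, hproper, hprime⟩ := id hF
  constructor
  · intro hx
    have hP : Order.IsPFilter {y : H | ∃ b ∈ F, x ⊓ D b ≤ y} := by
      refine Order.IsPFilter.of_def ?_ ?_ ?_
      · obtain ⟨b, hb⟩ := hne
        exact ⟨x ⊓ D b, b, hb, le_rfl⟩
      · rintro y ⟨b, hb, hy⟩ z ⟨c, hc, hz⟩
        refine ⟨x ⊓ D (b ⊓ c), ⟨b ⊓ c, hinf b c hb hc, le_rfl⟩, ?_, ?_⟩
        · exact (inf_le_inf_left x (hD inf_le_left)).trans hy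
        · exact (inf_le_inf_left x (hD inf_le_right)).trans hz
      · rintro y z hyz ⟨b, hb, hy⟩
        exact ⟨b, hb, hy.trans hyz⟩
    have hI : Order.IsIdeal {y : H | ∃ a, a ∉ F ∧ y ≤ Sq a} := by
      refine ⟨?_, ?_, ?_⟩
      · rintro y z hzy ⟨a, ha, hy⟩
        exact ⟨a, ha, hzy.trans hy⟩
      · obtain ⟨a, ha⟩ := (Set.ne_univ_iff_exists_notMem F).1 hproper
        exact ⟨Sq a, a, ha, le_rfl⟩
      · rintro y ⟨a, ha, hy⟩ z ⟨c, hc, hz⟩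
        refine ⟨Sq (a ⊔ c), ⟨a ⊔ c, fun h => (hprime a c h).elim ha hc, le_rfl⟩, ?_, ?_⟩
        · exact hy.trans (hSq le_sup_left)
        · exact hz.trans (hSq le_sup_right)
    have hdisj : Disjoint (hP.toPFilter : Set H) (hI.toIdeal : Set H) := by
      rw [Set.disjoint_left]
      rintro y ⟨b, hb, hby⟩ ⟨a, ha, hya⟩
      have hle : Dd x ≤ b ⇨ a :=
        (gc2 _ _).2 ((le_himp_iff.2 (hby.trans hya)).trans (fs2 b a))
      exact ha (hup _ _ (hinf _ _ (hup _ _ hx hle) hb) himp_inf_le)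
    obtain ⟨G, hG, hPG, hIG⟩ := exists_isPrimeFilter_separating _ _ hdisj
    refine ⟨⟨G, hG⟩, ⟨?_, ?_⟩, ?_⟩
    · intro a ha
      by_contra haF
      exact hIG (Sq a) ⟨a, haF, le_rfl⟩ ha
    · exact fun b hb => hPG (D b) ⟨b, hb, inf_le_right⟩
    · obtain ⟨b, hb⟩ := hne
      exact hPG x ⟨b, hb, inf_le_left⟩
  · rintro ⟨⟨G, hG⟩, hR, hxG⟩
    exact hR.1 _ (hG.2.1 _ _ hxG ((gc2 _ _).1 le_rfl))
end

section
/- Let H be an H2GC+FS-algebra. For every x ∈ H, a prime filter F contains ■x if and only if for every prime filter G such that there exists a prime filter K with G R^c K and F ⊆ K, we have x ∈ G; that is, h(■x) = ■^c(h(x)) where h(x) = {F prime filter | x ∈ F} and ■^c A = {F prime filter | ∀ G prime filter, (∃ K prime filter, G R^c K and F ⊆ K) → G ∈ A}. -/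
/-- Prime filter theorem: a filter `A` disjoint from an ideal `I` extends to a prime filter disjoint
from `I`. -/
theorem exists_isPrimeFilter {H : Type*} [HeytingAlgebra H] (A I : Set H)
    (hA0 : A.Nonempty) (hAu : ∀ x y : H, x ∈ A → x ≤ y → y ∈ A)
    (hAi : ∀ x y : H, x ∈ A → y ∈ A → x ⊓ y ∈ A)
    (hI0 : I.Nonempty) (hIl : ∀ x y : H, y ∈ I → x ≤ y → x ∈ I)
    (hIs : ∀ x y : H, x ∈ I → y ∈ I → x ⊔ y ∈ I)
    (hd : ∀ x ∈ A, x ∉ I) :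
    ∃ P : Set H, IsPrimeFilter P ∧ A ⊆ P ∧ ∀ x ∈ P, x ∉ I := by
  have hF : Order.IsPFilter A := Order.IsPFilter.of_def hA0
    (fun a ha b hb => ⟨a ⊓ b, hAi a b ha hb, inf_le_left, inf_le_right⟩)
    (fun {a b} hab ha => hAu a b ha hab)
  have hI : Order.IsIdeal I :=
    ⟨fun a b hab ha => hIl b a ha hab, hI0,
      fun a ha b hb => ⟨a ⊔ b, hIs a b ha hb, le_sup_left, le_sup_right⟩⟩
  obtain ⟨J, hJ, hIJ, hAJ⟩ := DistribLattice.prime_ideal_of_disjoint_filter_ideal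
    (F := hF.toPFilter) (I := hI.toIdeal) (Set.disjoint_left.2 hd)
  have hAJ' : ∀ a ∈ A, a ∉ J := fun a ha => Set.disjoint_left.1 hAJ ha
  have hIJ' : ∀ a ∈ I, a ∈ J := fun a ha => hIJ ha
  refine ⟨(J : Set H)ᶜ, ⟨?_, ?_, ?_, ?_, ?_⟩, hAJ', fun a ha hi => ha (hIJ' a hi)⟩
  · exact hA0.imp hAJ'
  · exact fun a b ha hab hb => ha (J.lower hab hb)
  · exact fun a b ha hb hab => (hJ.mem_or_mem hab).elim ha hb
  · intro h
    obtain ⟨i, hi⟩ := hI0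
    have : i ∈ (J : Set H)ᶜ := h ▸ Set.mem_univ i
    exact this (hIJ' i hi)
  · intro a b hab
    by_contra hcon
    simp only [Set.mem_compl_iff, not_or, not_not] at hcon
    exact hab (Order.Ideal.sup_mem hcon.1 hcon.2)

/-- In an H2GC+FS-algebra, h(■x) = ■^c(h(x)): a prime filter F contains ■x
iff every prime filter G with G (R^c ∘ ⊇) F contains x.
Here `D` is ◇, `Bx` is ■, `Dd` is ◆ and `Sq` is □. -/
theorem stmt17 {H : Type*} [HeytingAlgebra H] (D Bx Dd Sq : H → H)
    (gc1 : ∀ x y : H, D x ≤ y ↔ x ≤ Bx y)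
    (gc2 : ∀ x y : H, Dd x ≤ y ↔ x ≤ Sq y)
    (fs1 : ∀ x y : H, D (x ⇨ y) ≤ Sq x ⇨ D y)
    (fs2 : ∀ x y : H, (D x ⇨ Sq y) ≤ Sq (x ⇨ y))
    (x : H) :
    {F : {F : Set H // IsPrimeFilter F} | Bx x ∈ F.1} =
      {F : {F : Set H // IsPrimeFilter F} |
        ∀ G : {F : Set H // IsPrimeFilter F},
          (∃ K : {F : Set H // IsPrimeFilter F}, Rc Sq D G.1 K.1 ∧ F.1 ⊆ K.1) →
            G ∈ {G : {F : Set H // IsPrimeFilter F} | x ∈ G.1}} := by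
  have mD : Monotone D := GaloisConnection.monotone_l (u := Bx) gc1
  have mS : Monotone Sq := GaloisConnection.monotone_u (l := Dd) gc2
  ext ⟨F, hF⟩
  obtain ⟨hF0, hFu, hFi, -, -⟩ := id hF
  simp only [Set.mem_setOf_eq, Subtype.forall, Subtype.exists]
  constructor
  · rintro hx G hG ⟨K, hK, hR, hFK⟩
    exact hG.2.1 _ _ (hR.2 _ (hFK hx)) ((gc1 _ _).2 le_rfl)
  · intro h
    by_contra hx
    obtain ⟨G, hG, hFG, hxG⟩ := exists_isPrimeFilter {a | ∃ y ∈ F, D y ≤ a} (Set.Iic x)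
      (hF0.elim fun y hy => ⟨D y, y, hy, le_rfl⟩)
      (fun a b ⟨y, hy, hya⟩ hab => ⟨y, hy, hya.trans hab⟩)
      (fun a b ⟨y, hy, hya⟩ ⟨z, hz, hzb⟩ => ⟨y ⊓ z, hFi y z hy hz,
        le_inf ((mD inf_le_left).trans hya) ((mD inf_le_right).trans hzb)⟩)
      ⟨x, le_rfl⟩ (fun a b hb hab => hab.trans hb) (fun a b ha hb => sup_le ha hb)
      (fun a ⟨y, hy, hya⟩ hax => hx (hFu y _ hy ((gc1 _ _).1 (hya.trans hax))))
    obtain ⟨hG0, hGu, hGi, hGn, hGp⟩ := id hG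
    have hDF : ∀ y ∈ F, D y ∈ G := fun y hy => hFG ⟨y, hy, le_rfl⟩
    have hbot : ⊥ ∉ G := fun hb => hGn (Set.eq_univ_of_forall fun a => hGu _ _ hb bot_le)
    have hDbot : D ⊥ ∉ G := fun hb => hbot (hGu _ _ hb ((gc1 _ _).2 bot_le))
    have hStop : Sq ⊤ ∈ G := hG0.elim fun a ha => hGu _ _ ha ((gc2 _ _).1 le_top)
    have hSinf : ∀ a b, Sq a ⊓ Sq b ≤ Sq (a ⊓ b) := fun a b =>
      (GaloisConnection.u_inf (l := Dd) (u := Sq) gc2).ge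
    have hDsup : ∀ a b, D (a ⊔ b) ≤ D a ⊔ D b := fun a b =>
      (GaloisConnection.l_sup (l := D) (u := Bx) gc1).le
    obtain ⟨K, hK, hFK, hKD⟩ := exists_isPrimeFilter
      {w | ∃ y ∈ F, ∃ z, Sq z ∈ G ∧ y ⊓ z ≤ w} {w | D w ∉ G}
      (hF0.elim fun y hy => ⟨y, y, hy, ⊤, hStop, inf_le_left⟩)
      (fun a b ⟨y, hy, z, hz, hyz⟩ hab => ⟨y, hy, z, hz, hyz.trans hab⟩)
      (fun a b ⟨y, hy, z, hz, hyz⟩ ⟨y', hy', z', hz', hyz'⟩ =>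
        ⟨y ⊓ y', hFi _ _ hy hy', z ⊓ z', hGu _ _ (hGi _ _ hz hz') (hSinf z z'),
          le_inf ((inf_le_inf inf_le_left inf_le_left).trans hyz)
            ((inf_le_inf inf_le_right inf_le_right).trans hyz')⟩)
      ⟨⊥, hDbot⟩ (fun a b hb hab ha => hb (hGu _ _ ha (mD hab)))
      (fun a b ha hb hab => (hGp _ _ (hGu _ _ hab (hDsup a b))).elim ha hb)
      (by
        rintro w ⟨y, hy, z, hz, hyz⟩ hw
        have h1 : D (z ⇨ w) ∈ G := hGu _ _ (hDF y hy) (mD (le_himp_iff.2 hyz))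
        have h2 : Sq z ⇨ D w ∈ G := hGu _ _ h1 (fs1 z w)
        exact hw (hGu _ _ (hGi _ _ h2 hz) himp_inf_le))
    refine hxG x (h G hG ⟨K, hK, ⟨fun z hz => ?_, fun w hw => not_not.1 (hKD w hw)⟩, fun y hy => ?_⟩)
      le_rfl
    · exact hF0.elim fun y hy => hFK ⟨y, hy, z, hz, inf_le_right⟩
    · exact hFK ⟨y, hy, ⊤, hStop, inf_le_left⟩
end

section
/- Representation theorem: let H be an H2GC+FS-algebra and define h(x) = {F prime filter of H | x ∈ F}. Then h is injective and, for all x, y ∈ H: h(x ⊔ y) = h(x) ∪ h(y); h(x ⊓ y) = h(x) ∩ h(y); h(0) = ∅; h(1) is the set of all prime filters; h(x ⇨ y) = {F | ∀ prime filter G with F ⊆ G, x ∈ G → y ∈ G}; h(◇x) = {F | ∃ prime filter G, F R^c G and x ∈ G}; h(□x) = {F | ∀ prime filter G, (∃ prime filter K, F ⊆ K and K R^c G) → x ∈ G}; h(◆x) = {F | ∃ prime filter G, G R^c F and x ∈ G}; and h(■x) = {F | ∀ prime filter G, (∃ prime filter K, G R^c K and F ⊆ K) → x ∈ G}. Hence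 every H2GC+FS-algebra embeds into the complex algebra of its canonical IK-frame. -/
/-- The type of prime filters of `H`. -/
def PF (H : Type*) [HeytingAlgebra H] : Type _ := {F : Set H // IsPrimeFilter F}

/-- The Stone-type map `h` sending `x` to the set of prime filters containing it. -/
def hmap {H : Type*} [HeytingAlgebra H] (x : H) : Set (PF H) := {F : PF H | x ∈ F.1}

/-- Prime filter separation, for generating sets: `A` and `B` generate a filter, `I` an ideal. -/
theorem exists_primeFilter {H : Type*} [HeytingAlgebra H] (A B I : Set H)
    (hA : A.Nonempty) (hA' : ∀ a ∈ A, ∀ b ∈ A, ∃ c ∈ A, c ≤ a ⊓ b)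
    (hB : B.Nonempty) (hB' : ∀ a ∈ B, ∀ b ∈ B, ∃ c ∈ B, c ≤ a ⊓ b)
    (hI : I.Nonempty) (hI' : ∀ a ∈ I, ∀ b ∈ I, ∃ c ∈ I, a ⊔ b ≤ c)
    (hd : ∀ a ∈ A, ∀ b ∈ B, ∀ i ∈ I, ¬ a ⊓ b ≤ i) :
    ∃ G : PF H, A ⊆ G.1 ∧ B ⊆ G.1 ∧ ∀ i ∈ I, i ∉ G.1 := by
  obtain ⟨a₀, ha₀⟩ := hA
  obtain ⟨b₀, hb₀⟩ := hB
  obtain ⟨i₀, hi₀⟩ := hI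
  have hF : Order.IsPFilter {x : H | ∃ a ∈ A, ∃ b ∈ B, a ⊓ b ≤ x} := by
    refine Order.IsPFilter.of_def ⟨a₀ ⊓ b₀, a₀, ha₀, b₀, hb₀, le_rfl⟩ ?_ ?_
    · rintro x ⟨a, ha, b, hb, hx⟩ y ⟨a', ha', b', hb', hy⟩
      obtain ⟨c, hc, hca⟩ := hA' a ha a' ha'
      obtain ⟨d, hd, hdb⟩ := hB' b hb b' hb'
      refine ⟨c ⊓ d, ⟨c, hc, d, hd, le_rfl⟩, ?_, ?_⟩
      · exact (inf_le_inf (hca.trans inf_le_left) (hdb.trans inf_le_left)).trans hx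
      · exact (inf_le_inf (hca.trans inf_le_right) (hdb.trans inf_le_right)).trans hy
    · rintro x y hxy ⟨a, ha, b, hb, hx⟩
      exact ⟨a, ha, b, hb, hx.trans hxy⟩
  have hJ : Order.IsIdeal {x : H | ∃ i ∈ I, x ≤ i} := by
    refine ⟨?_, ⟨i₀, i₀, hi₀, le_rfl⟩, ?_⟩
    · rintro x y hxy ⟨i, hi, hx⟩
      exact ⟨i, hi, hxy.trans hx⟩
    · rintro x ⟨i, hi, hx⟩ y ⟨j, hj, hy⟩
      obtain ⟨k, hk, hijk⟩ := hI' i hi j hj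
      exact ⟨k, ⟨k, hk, le_rfl⟩, hx.trans (le_sup_left.trans hijk),
        hy.trans (le_sup_right.trans hijk)⟩
  have hdisj : Disjoint (hF.toPFilter : Set H) (hJ.toIdeal : Set H) := by
    rw [Set.disjoint_left]
    rintro x ⟨a, ha, b, hb, hx⟩ ⟨i, hi, hxi⟩
    exact hd a ha b hb i hi (hx.trans hxi)
  obtain ⟨J, hJp, hIJ, hFJ⟩ := DistribLattice.prime_ideal_of_disjoint_filter_ideal hdisj
  rw [Set.disjoint_left] at hFJ
  have hAJ : ∀ a ∈ A, a ∉ J := fun a ha => hFJ ⟨a, ha, b₀, hb₀, inf_le_left⟩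
  refine ⟨⟨{x | x ∉ J}, ⟨a₀, hAJ a₀ ha₀⟩, ?_, ?_, ?_, ?_⟩, hAJ, ?_, ?_⟩
  · exact fun x y hx hxy hy => hx (J.lower hxy hy)
  · exact fun x y hx hy hxy => (hJp.mem_or_mem hxy).elim hx hy
  · intro h
    exact (h ▸ Set.mem_univ i₀ : i₀ ∈ {x | x ∉ J}) (hIJ ⟨i₀, hi₀, le_rfl⟩)
  · intro x y hxy
    by_contra! h
    exact hxy (Order.Ideal.sup_mem (not_not.1 h.1) (not_not.1 h.2))
  · exact fun b hb => hFJ ⟨a₀, ha₀, b, hb, inf_le_right⟩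
  · exact fun i hi h => h (hIJ ⟨i, hi, le_rfl⟩)

section
variable {H : Type*} [HeytingAlgebra H]

namespace PF

theorem up (F : PF H) {x y : H} (hx : x ∈ F.1) (h : x ≤ y) : y ∈ F.1 := F.2.2.1 x y hx h

theorem inf_mem (F : PF H) {x y : H} (hx : x ∈ F.1) (hy : y ∈ F.1) : x ⊓ y ∈ F.1 :=
  F.2.2.2.1 x y hx hy

theorem mem_or (F : PF H) {x y : H} (h : x ⊔ y ∈ F.1) : x ∈ F.1 ∨ y ∈ F.1 :=
  F.2.2.2.2.2 x y h

theorem top_mem (F : PF H) : ⊤ ∈ F.1 := by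
  obtain ⟨x, hx⟩ := F.2.1
  exact F.up hx le_top

theorem bot_notMem (F : PF H) : ⊥ ∉ F.1 := fun h =>
  F.2.2.2.2.1 (Set.eq_univ_of_forall fun _ => F.up h bot_le)

theorem mp (F : PF H) {x y : H} (h : x ⇨ y ∈ F.1) (hx : x ∈ F.1) : y ∈ F.1 :=
  F.up (F.inf_mem h hx) himp_inf_le

end PF

/-- Separation of the filter generated by `A` and a single `y` from a single `x`; `y = ⊤` adds
nothing to the filter generated by `A`. -/
theorem exists_primeFilter_notMem (A : Set H) (x y : H) (hA : A.Nonempty)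
    (hA' : ∀ a ∈ A, ∀ b ∈ A, ∃ c ∈ A, c ≤ a ⊓ b) (hx : ∀ a ∈ A, ¬ a ⊓ y ≤ x) :
    ∃ G : PF H, A ⊆ G.1 ∧ y ∈ G.1 ∧ x ∉ G.1 := by
  obtain ⟨G, h1, h2, h3⟩ := exists_primeFilter A {y} {x} hA hA' (Set.singleton_nonempty _)
    (by simp) (Set.singleton_nonempty _) (by simp) (by simpa using hx)
  exact ⟨G, h1, h2 rfl, h3 x rfl⟩

/-- If `◇F ⊆ G`, then `G` sees a prime filter extending `F`; the filter base `F` joined with `□⁻¹G`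
is separated from `(◇⁻¹G)ᶜ` by (FS1). -/
theorem exists_Rc_right {D Bx Sq : H → H} (gc1 : GaloisConnection D Bx)
    (hinf : ∀ x y, Sq x ⊓ Sq y ≤ Sq (x ⊓ y)) (htop : Sq ⊤ = ⊤)
    (fs1 : ∀ x y : H, D (x ⇨ y) ≤ Sq x ⇨ D y)
    (F : Set H) (hF : F.Nonempty) (hF' : ∀ a ∈ F, ∀ b ∈ F, ∃ c ∈ F, c ≤ a ⊓ b)
    (G : PF H) (h : ∀ f ∈ F, D f ∈ G.1) :
    ∃ K : PF H, F ⊆ K.1 ∧ Rc Sq D G.1 K.1 := by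
  obtain ⟨K, h1, h2, h3⟩ := exists_primeFilter F {a | Sq a ∈ G.1} {y | D y ∉ G.1} hF hF'
    ⟨⊤, by simpa [htop] using G.top_mem⟩
    (fun a ha b hb => ⟨a ⊓ b, G.up (G.inf_mem ha hb) (hinf a b), le_rfl⟩)
    ⟨⊥, by simpa [gc1.l_bot] using G.bot_notMem⟩
    (fun a ha b hb => ⟨a ⊔ b, fun hab => by
      rw [gc1.l_sup] at hab
      exact (G.mem_or hab).elim ha hb, le_rfl⟩)
    (fun f hf a ha y hy hle =>
      hy (G.mp (G.up (G.up (h f hf) (gc1.monotone_l (le_himp_iff.2 hle))) (fs1 a y)) ha))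
  exact ⟨K, h1, h2, fun x hx => by_contra fun hn => h3 x hn hx⟩

/-- If `□⁻¹` of the filter generated by `F` is contained in `G`, then `G` is seen from a prime filter
extending `F`; the filter base `F` joined with `◇G` is separated from `□(Gᶜ)` by (FS2). -/
theorem exists_Rc_left {D Sq : H → H} (hD : Monotone D)
    (hSq : Monotone Sq)
    (fs2 : ∀ x y : H, (D x ⇨ Sq y) ≤ Sq (x ⇨ y))
    (F : Set H) (hF : F.Nonempty) (hF' : ∀ a ∈ F, ∀ b ∈ F, ∃ c ∈ F, c ≤ a ⊓ b)
    (G : PF H) (h : ∀ f ∈ F, ∀ a, f ≤ Sq a → a ∈ G.1) :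
    ∃ K : PF H, F ⊆ K.1 ∧ Rc Sq D K.1 G.1 := by
  obtain ⟨K, h1, h2, h3⟩ := exists_primeFilter F (Set.image D G.1) (Set.image Sq (G.1)ᶜ) hF hF'
    (G.2.1.image D)
    (by
      rintro _ ⟨a, ha, rfl⟩ _ ⟨b, hb, rfl⟩
      exact ⟨_, ⟨a ⊓ b, G.inf_mem ha hb, rfl⟩, hD.map_inf_le a b⟩)
    ⟨_, ⊥, G.bot_notMem, rfl⟩
    (by
      rintro _ ⟨a, ha, rfl⟩ _ ⟨b, hb, rfl⟩
      exact ⟨_, ⟨a ⊔ b, fun hab => (G.mem_or hab).elim ha hb, rfl⟩, hSq.le_map_sup a b⟩)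
    (by
      rintro f hf _ ⟨g, hg, rfl⟩ _ ⟨b, hb, rfl⟩ hle
      exact hb (G.mp (h f hf _ ((le_himp_iff.2 hle).trans (fs2 g b))) hg))
  exact ⟨K, h1, fun x hx => by_contra fun hn => h3 _ ⟨x, hn, rfl⟩ hx, fun x hx => h2 ⟨x, hx, rfl⟩⟩

end

/-- Representation theorem: for an H2GC+FS-algebra, the map
`h x = {F prime filter | x ∈ F}` is an injective homomorphism into the complex
algebra of the canonical IK-frame: it preserves ⊔, ⊓, 0, 1, ⇨, ◇, □, ◆ and ■.
Here `D` is ◇, `Bx` is ■, `Dd` is ◆ and `Sq` is □. -/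
theorem stmt18 {H : Type*} [HeytingAlgebra H] (D Bx Dd Sq : H → H)
    (gc1 : ∀ x y : H, D x ≤ y ↔ x ≤ Bx y)
    (gc2 : ∀ x y : H, Dd x ≤ y ↔ x ≤ Sq y)
    (fs1 : ∀ x y : H, D (x ⇨ y) ≤ Sq x ⇨ D y)
    (fs2 : ∀ x y : H, (D x ⇨ Sq y) ≤ Sq (x ⇨ y)) :
    Function.Injective (hmap (H := H)) ∧
    (∀ x y : H, hmap (x ⊔ y) = hmap x ∪ hmap y) ∧
    (∀ x y : H, hmap (x ⊓ y) = hmap x ∩ hmap y) ∧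
    hmap (⊥ : H) = (∅ : Set (PF H)) ∧
    hmap (⊤ : H) = (Set.univ : Set (PF H)) ∧
    (∀ x y : H, hmap (x ⇨ y) =
      {F : PF H | ∀ G : PF H, F.1 ⊆ G.1 → x ∈ G.1 → y ∈ G.1}) ∧
    (∀ x : H, hmap (D x) =
      {F : PF H | ∃ G : PF H, Rc Sq D F.1 G.1 ∧ x ∈ G.1}) ∧
    (∀ x : H, hmap (Sq x) =
      {F : PF H | ∀ G : PF H,
        (∃ K : PF H, F.1 ⊆ K.1 ∧ Rc Sq D K.1 G.1) → x ∈ G.1}) ∧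
    (∀ x : H, hmap (Dd x) =
      {F : PF H | ∃ G : PF H, Rc Sq D G.1 F.1 ∧ x ∈ G.1}) ∧
    (∀ x : H, hmap (Bx x) =
      {F : PF H | ∀ G : PF H,
        (∃ K : PF H, Rc Sq D G.1 K.1 ∧ F.1 ⊆ K.1) → x ∈ G.1}) := by
  have g1 : GaloisConnection D Bx := gc1
  have g2 : GaloisConnection Dd Sq := gc2
  have hinf : ∀ x y, Sq x ⊓ Sq y ≤ Sq (x ⊓ y) := fun x y => g2.u_inf.ge
  have filt : ∀ F : PF H, ∀ a ∈ F.1, ∀ b ∈ F.1, ∃ c ∈ F.1, c ≤ a ⊓ b :=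
    fun F a ha b hb => ⟨_, F.inf_mem ha hb, le_rfl⟩
  have key : ∀ x y : H, hmap x ⊆ hmap y → x ≤ y := by
    intro x y h
    by_contra hn
    obtain ⟨G, -, hx, hy⟩ := exists_primeFilter_notMem {⊤} y x (Set.singleton_nonempty _)
      (by simp) (by simpa using hn)
    exact hy (h (a := G) hx)
  refine ⟨fun x y h => le_antisymm (key x y h.subset) (key y x h.superset), fun x y => ?_,
    fun x y => ?_, ?_, ?_, fun x y => ?_, fun x => ?_, fun x => ?_, fun x => ?_, fun x => ?_⟩
  · ext F
    exact ⟨F.mem_or, fun h => h.elim (fun h => F.up h le_sup_left) fun h => F.up h le_sup_right⟩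
  · ext F
    exact ⟨fun h => ⟨F.up h inf_le_left, F.up h inf_le_right⟩, fun h => F.inf_mem h.1 h.2⟩
  · exact Set.eq_empty_of_forall_notMem fun F => F.bot_notMem
  · exact Set.eq_univ_of_forall fun F => F.top_mem
  · ext F
    refine ⟨fun h G hFG hx => G.mp (hFG h) hx, fun h => ?_⟩
    by_contra hn
    obtain ⟨G, hFG, hx, hy⟩ := exists_primeFilter_notMem F.1 y x F.2.1 (filt F)
      (fun a ha hle => hn (F.up ha (le_himp_iff.2 hle)))
    exact hy (h G hFG hx)
  · ext F
    refine ⟨fun h => ?_, fun ⟨G, hR, hx⟩ => hR.2 x hx⟩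
    obtain ⟨K, hK, hR⟩ := exists_Rc_right g1 hinf g2.u_top fs1 {x}
      (Set.singleton_nonempty _) (by simp) F (by rintro _ rfl; exact h)
    exact ⟨K, hR, hK rfl⟩
  · ext F
    refine ⟨fun h G ⟨K, hFK, hR⟩ => hR.1 x (hFK h), fun h => ?_⟩
    by_contra hn
    obtain ⟨G, hG, -, hx⟩ := exists_primeFilter_notMem {a | Sq a ∈ F.1} x ⊤
      ⟨⊤, by simpa [g2.u_top] using F.top_mem⟩
      (fun a ha b hb => ⟨a ⊓ b, F.up (F.inf_mem ha hb) (hinf a b), le_rfl⟩)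
      (fun a ha hle => hn (F.up ha (g2.monotone_u (by simpa using hle))))
    obtain ⟨K, hK, hR⟩ := exists_Rc_left g1.monotone_l g2.monotone_u fs2 F.1 F.2.1 (filt F) G
      (fun f hf a hle => hG (F.up hf hle))
    exact hx (h G ⟨K, hK, hR⟩)
  · ext F
    refine ⟨fun h => ?_, fun ⟨G, hR, hx⟩ => hR.1 _ (G.up hx (g2.le_u_l x))⟩
    obtain ⟨K, hK, hR⟩ := exists_Rc_left g1.monotone_l g2.monotone_u fs2 {x}
      (Set.singleton_nonempty _) (by simp) F
      (by
        rintro _ rfl a hle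
        exact F.up h ((gc2 _ _).2 hle))
    exact ⟨K, hR, hK rfl⟩
  · ext F
    refine ⟨fun h G ⟨K, hR, hFK⟩ => G.up (hR.2 _ (hFK h)) (g1.l_u_le x), fun h => ?_⟩
    by_contra hn
    obtain ⟨G, hG, -, hx⟩ := exists_primeFilter_notMem (Set.image D F.1) x ⊤ (F.2.1.image D)
      (by
        rintro _ ⟨a, ha, rfl⟩ _ ⟨b, hb, rfl⟩
        exact ⟨_, ⟨a ⊓ b, F.inf_mem ha hb, rfl⟩, g1.monotone_l.map_inf_le a b⟩)
      (by
        rintro _ ⟨a, ha, rfl⟩ hle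
        exact hn (F.up ha ((gc1 _ _).1 (by simpa using hle))))
    obtain ⟨K, hK, hR⟩ := exists_Rc_right g1 hinf g2.u_top fs1 F.1 F.2.1 (filt F) G
      (fun f hf => hG ⟨f, hf, rfl⟩)
    exact hx (h G ⟨K, hR, hK⟩)
end

section
/- Let H be an H2GC+FS-algebra. Then for all x ∈ H: ◇x ≤ ¬□(¬x) and ◆x ≤ ¬■(¬x), where ¬x := x ⇨ ⊥ is the Heyting negation. -/
/-- In every H2GC+FS-algebra: ◇x ≤ ¬□(¬x) and ◆x ≤ ¬■(¬x), where
¬x := x ⇨ ⊥. Here `D` is ◇, `Bx` is ■, `Dd` is ◆ and `Sq` is □. -/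
theorem stmt19 {H : Type*} [HeytingAlgebra H] (D Bx Dd Sq : H → H)
    (gc1 : ∀ x y : H, D x ≤ y ↔ x ≤ Bx y)
    (gc2 : ∀ x y : H, Dd x ≤ y ↔ x ≤ Sq y)
    (fs1 : ∀ x y : H, D (x ⇨ y) ≤ Sq x ⇨ D y)
    (fs2 : ∀ x y : H, (D x ⇨ Sq y) ≤ Sq (x ⇨ y)) :
    ∀ x : H, D x ≤ Sq (x ⇨ ⊥) ⇨ ⊥ ∧ Dd x ≤ Bx (x ⇨ ⊥) ⇨ ⊥ := by
  intro x
  constructor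
  · -- ◇x ≤ ◇¬¬x ≤ □¬x ⇨ ◇⊥ by (FS1), and ◇⊥ = ⊥ since ◇ is a left adjoint.
    have hmono : D x ≤ D ((x ⇨ ⊥) ⇨ ⊥) :=
      (gc1 _ _).2 ((le_himp_iff.2 inf_himp_le).trans ((gc1 _ _).1 le_rfl))
    have hbot : D ⊥ ≤ ⊥ := (gc1 _ _).2 bot_le
    exact hmono.trans ((fs1 _ _).trans (himp_le_himp_left hbot))
  · -- By adjunction it suffices that x ≤ □¬■¬x. Since ◇■¬x ≤ ¬x, x is disjoint from ◇■¬x,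
    -- so x ≤ ◇■¬x ⇨ □⊥, and (FS2) applies.
    rw [gc2]
    have hcounit : D (Bx (x ⇨ ⊥)) ≤ x ⇨ ⊥ := (gc1 _ _).2 le_rfl
    refine le_trans (le_himp_iff.2 ?_) (fs2 _ _)
    exact ((inf_le_inf_left x hcounit).trans inf_himp_le).trans bot_le
end
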